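/- Let q be a real number with 0 < q and q ≠ 1, let l₁, l₂, α₁, λ be real numbers and t₁, t₂ nonzero reals, and let (i,i') = (1,2) or (i,i') = (2,1). Assume λ + α₁ = -N for some positive integer N (so (q^{λ+α₁};q)_n = 0 for all n > N and the series below is a finite sum). Then the function g(x) = x^{λ} · Σ_{n=0}^{N} (-q^{-λ-α₁+l_i-l_{i'}}·t_i/t_{i'})^n · q^{-n(n-1)/2} · [(q^{λ+α₁};q)_n / (q;q)_n] · (x/(q^{l_i-1/2}t_i);q)_n satisfies the variant of the confluent q-hypergeometric equation of type (2,0) for all x > 0. -/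

import Mathlib

/-- The finite q-shifted factorial `(a;q)_n = ∏_{i=0}^{n-1} (1 - a q^i)`. -/
noncomputable def qPoch (q a : ℝ) (n : ℕ) : ℝ :=
  ∏ i ∈ Finset.range n, (1 - a * q ^ i)

/-- The variant of the confluent q-hypergeometric equation of type (2,0) (for `x > 0`). -/
def confEq20 (q l₁ l₂ α₁ lam t₁ t₂ : ℝ) (g : ℝ → ℝ) : Prop :=
  ∀ x : ℝ, 0 < x →
    q ^ (-2 * lam - 1) * (1 - q ^ (-l₁ + 1/2) * t₁⁻¹ * x) * (1 - q ^ (-l₂ + 1/2) * t₂⁻¹ * x)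
        * g (q * x)
    + g (x / q)
    - (q ^ (-α₁ - l₁ - l₂ - 2 * lam) * t₁⁻¹ * t₂⁻¹ * x ^ 2
        - q ^ (-lam - 1/2) * (q ^ (-l₁) * t₁⁻¹ + q ^ (-l₂) * t₂⁻¹) * x
        + q ^ (-lam) * (1 + q⁻¹)) * g x = 0

/-! Removing the factor `x ^ λ` turns the equation into `L f = 0` for a linear `q`-difference
operator `L`. On the shifted factorials `φ n x = (u x; q)_n`, with `1 - u x` a factor of the
leading coefficient, `L` is two-term: `L (φ n)` is `x ^ 2` times a combination of `φ n` and
`φ (n - 1)`. When the coefficients of `∑ a n • φ n` satisfy the matching first-order recurrence, the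
image of a partial sum telescopes to its top term, whose coefficient contains the factor
`q ^ N - b` and vanishes for `b = q ^ (-λ - α₁) = q ^ N`. -/

section qPoch

variable {q : ℝ}

theorem qPoch_succ (q a : ℝ) (n : ℕ) : qPoch q a (n + 1) = qPoch q a n * (1 - a * q ^ n) :=
  Finset.prod_range_succ _ n

theorem qPoch_succ' (q a : ℝ) (n : ℕ) : qPoch q a (n + 1) = (1 - a) * qPoch q (q * a) n := by
  simp only [qPoch, Finset.prod_range_succ', pow_zero, mul_one, pow_succ', mul_assoc,
    mul_left_comm a q, mul_comm (1 - a)]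

theorem qPoch_self_ne_zero (hq : 0 < q) (hq1 : q ≠ 1) (n : ℕ) : qPoch q q n ≠ 0 := by
  refine Finset.prod_ne_zero_iff.mpr fun i _ => ?_
  rw [← pow_succ', sub_ne_zero, ne_comm, Ne, pow_eq_one_iff_of_nonneg hq.le i.succ_ne_zero]
  exact hq1

/-- The coefficient `(-r)^n q^{-n(n-1)/2} (A;q)_n / (q;q)_n` of `(y;q)_n` in the hypergeometric
series solving the equation. -/
noncomputable def seriesCoeff (q A r : ℝ) (n : ℕ) : ℝ :=
  (-r) ^ n * q ^ (-(n : ℝ) * ((n : ℝ) - 1) / 2) * (qPoch q A n / qPoch q q n)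

theorem rpow_neg_mul_sub_one_div_two_succ (hq : 0 < q) (n : ℕ) :
    q ^ (-((n + 1 : ℕ) : ℝ) * (((n + 1 : ℕ) : ℝ) - 1) / 2) =
      q ^ (-(n : ℝ) * ((n : ℝ) - 1) / 2) / q ^ n := by
  rw [← Real.rpow_natCast q n, ← Real.rpow_sub hq]
  congr 1
  push_cast
  ring

theorem seriesCoeff_succ (hq : 0 < q) (hq1 : q ≠ 1) (A r : ℝ) (n : ℕ) :
    q ^ n * (1 - q ^ (n + 1)) * seriesCoeff q A r (n + 1) =
      -r * (1 - A * q ^ n) * seriesCoeff q A r n := by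
  have h_left : qPoch q q n ≠ 0 := qPoch_self_ne_zero hq hq1 n
  have h_right : 1 - q ^ n * q ≠ 0 := by
    have h := qPoch_self_ne_zero hq hq1 (n + 1)
    rw [qPoch_succ, mul_comm q] at h
    exact right_ne_zero_of_mul h
  simp only [seriesCoeff, rpow_neg_mul_sub_one_div_two_succ hq, qPoch_succ, mul_comm q (q ^ n),
    pow_succ q, pow_succ (-r)]
  field_simp

end qPoch

section ConfOp

variable {q : ℝ}

/-- The `q`-difference operator
`f ↦ (1 - u x)(1 - v x) f(q x) + q f(x / q) - (b u v x² - (u + v) x + q + 1) f(x)`, to which the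
confluent equation reduces after removing the factor `x ^ λ`. -/
noncomputable def confOp (q b u v : ℝ) : (ℝ → ℝ) →ₗ[ℝ] ℝ → ℝ where
  toFun f x := (1 - u * x) * (1 - v * x) * f (q * x) + q * f (x / q) -
    (b * u * v * x ^ 2 - (u + v) * x + (q + 1)) * f x
  map_add' f g := by
    ext x
    simp only [Pi.add_apply]
    ring
  map_smul' a f := by
    ext x
    simp only [Pi.smul_apply, smul_eq_mul, RingHom.id_apply]
    ring

theorem confOp_apply (q b u v : ℝ) (f : ℝ → ℝ) (x : ℝ) :
    confOp q b u v f x = (1 - u * x) * (1 - v * x) * f (q * x) + q * f (x / q) -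
      (b * u * v * x ^ 2 - (u + v) * x + (q + 1)) * f x :=
  rfl

/-- The functions `x ↦ (u x; q)_n` in which solutions are expanded. -/
noncomputable def qPochBasis (q u : ℝ) (n : ℕ) (x : ℝ) : ℝ :=
  qPoch q (u * x) n

theorem confOp_qPochBasis_zero (q b u v x : ℝ) :
    confOp q b u v (qPochBasis q u 0) x = u * v * (1 - b) * x ^ 2 := by
  simp only [confOp_apply, qPochBasis, qPoch, Finset.prod_range_zero]
  ring

theorem confOp_qPochBasis_succ (hq : q ≠ 0) (b u v x : ℝ) (n : ℕ) :
    confOp q b u v (qPochBasis q u (n + 1)) x =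
      u * x ^ 2 * (v * (q ^ (n + 1) - b) * qPochBasis q u (n + 1) x -
        u * q ^ n * (1 - q ^ (n + 1)) * qPochBasis q u n x) := by
  have h_mul : (1 - u * x) * qPoch q (u * (q * x)) (n + 1) =
      qPoch q (u * x) n * (1 - u * x * q ^ n) * (1 - u * x * q ^ (n + 1)) := by
    rw [mul_left_comm u q x, ← qPoch_succ', qPoch_succ, qPoch_succ]
  have h_div : q * qPoch q (u * (x / q)) (n + 1) = (q - u * x) * qPoch q (u * x) n := by
    rw [qPoch_succ', mul_left_comm q u, mul_div_cancel₀ x hq]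
    field_simp
  simp only [confOp_apply, qPochBasis]
  rw [qPoch_succ q (u * x), h_div]
  linear_combination (1 - v * x) * h_mul

theorem confOp_sum_qPochBasis (hq : q ≠ 0) {b u v : ℝ} {a : ℕ → ℝ}
    (ha : ∀ n, u * q ^ n * (1 - q ^ (n + 1)) * a (n + 1) = v * (q ^ n - b) * a n)
    (N : ℕ) (x : ℝ) :
    confOp q b u v (∑ n ∈ Finset.range (N + 1), a n • qPochBasis q u n) x =
      u * v * (q ^ N - b) * x ^ 2 * (a N * qPochBasis q u N x) := by
  induction N with
  | zero =>
    simp only [zero_add, Finset.sum_range_one, map_smul, Pi.smul_apply, smul_eq_mul,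
      confOp_qPochBasis_zero, qPochBasis, qPoch, Finset.prod_range_zero]
    ring
  | succ N ih =>
    rw [Finset.sum_range_succ, map_add, Pi.add_apply, ih, map_smul, Pi.smul_apply, smul_eq_mul,
      confOp_qPochBasis_succ hq]
    linear_combination -u * x ^ 2 * qPochBasis q u N x * ha N

theorem confOp_sum_seriesCoeff_eq_zero (hq : 0 < q) (hq1 : q ≠ 1) {u : ℝ} (hu : u ≠ 0) (v : ℝ)
    (N : ℕ) :
    confOp q (q ^ N) u v (fun x => ∑ n ∈ Finset.range (N + 1),
      seriesCoeff q (q ^ N)⁻¹ (q ^ N * (v / u)) n * qPoch q (u * x) n) = 0 := by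
  have h_rec (n : ℕ) :
      u * q ^ n * (1 - q ^ (n + 1)) * seriesCoeff q (q ^ N)⁻¹ (q ^ N * (v / u)) (n + 1) =
        v * (q ^ n - q ^ N) * seriesCoeff q (q ^ N)⁻¹ (q ^ N * (v / u)) n := by
    rw [mul_assoc u, mul_assoc u, seriesCoeff_succ hq hq1]
    field_simp
    ring
  have h_expand : (fun x => ∑ n ∈ Finset.range (N + 1),
      seriesCoeff q (q ^ N)⁻¹ (q ^ N * (v / u)) n * qPoch q (u * x) n) =
        ∑ n ∈ Finset.range (N + 1),
          seriesCoeff q (q ^ N)⁻¹ (q ^ N * (v / u)) n • qPochBasis q u n := by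
    ext x
    simp only [Finset.sum_apply, Pi.smul_apply, smul_eq_mul, qPochBasis]
  ext x
  rw [h_expand, confOp_sum_qPochBasis hq.ne' h_rec, sub_self]
  simp only [mul_zero, zero_mul, Pi.zero_apply]

end ConfOp

section ConfEq20

variable {q l₁ l₂ α₁ lam t₁ t₂ : ℝ}

theorem confEq20_comm {g : ℝ → ℝ} :
    confEq20 q l₁ l₂ α₁ lam t₁ t₂ g ↔ confEq20 q l₂ l₁ α₁ lam t₂ t₁ g := by
  refine forall₂_congr fun x _ => ?_
  rw [show -α₁ - l₁ - l₂ - 2 * lam = -α₁ - l₂ - l₁ - 2 * lam by ring]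
  ring_nf

/-- The reciprocal `q^{-l+1/2} t⁻¹` of the zero `q^{l-1/2} t` of a factor of the leading
coefficient. -/
noncomputable def invRoot (q l t : ℝ) : ℝ :=
  q ^ (-l + 1/2) * t⁻¹

theorem div_rpow_mul_eq_invRoot_mul (hq : 0 < q) (l t x : ℝ) :
    x / (q ^ (l - 1/2) * t) = invRoot q l t * x := by
  rw [invRoot, show -l + 1/2 = -(l - 1/2) by ring, Real.rpow_neg hq.le, ← mul_inv,
    div_eq_inv_mul]

theorem invRoot_div_invRoot (hq : 0 < q) (l₁ l₂ t₁ t₂ : ℝ) :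
    invRoot q l₂ t₂ / invRoot q l₁ t₁ = q ^ (l₁ - l₂) * t₁ / t₂ := by
  rw [invRoot, invRoot, mul_div_mul_comm, ← Real.rpow_sub hq, inv_div_inv, ← mul_div_assoc]
  ring_nf

theorem confEq20_rpow_mul_iff (hq : 0 < q) {f : ℝ → ℝ} :
    confEq20 q l₁ l₂ α₁ lam t₁ t₂ (fun x => x ^ lam * f x) ↔
      ∀ x, 0 < x →
        confOp q (q ^ (-lam - α₁)) (invRoot q l₁ t₁) (invRoot q l₂ t₂) f x = 0 := by
  refine forall₂_congr fun x hx => ?_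
  have h_shift : q ^ (-2 * lam - 1) * (q * x) ^ lam = q ^ (-lam - 1) * x ^ lam := by
    rw [Real.mul_rpow hq.le hx.le, ← mul_assoc, ← Real.rpow_add hq]
    ring_nf
  have h_const : q ^ (-lam) = q ^ (-lam - 1) * q := by
    rw [← Real.rpow_add_one hq.ne', sub_add_cancel]
  have h_unshift : (x / q) ^ lam = q ^ (-lam - 1) * q * x ^ lam := by
    rw [← h_const, Real.div_rpow hx.le hq.le, Real.rpow_neg hq.le, div_eq_inv_mul]
  have h_linear : q ^ (-lam - 1/2) = q ^ (-lam - 1) * q ^ (1/2 : ℝ) := by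
    rw [← Real.rpow_add hq]
    ring_nf
  have h_quadratic : q ^ (-α₁ - l₁ - l₂ - 2 * lam) =
      q ^ (-lam - 1) * q ^ (-lam - α₁) * q ^ (-l₁ + 1/2) * q ^ (-l₂ + 1/2) := by
    simp only [← Real.rpow_add hq]
    ring_nf
  have h_factor : q ^ (-lam - 1) * x ^ lam ≠ 0 := by positivity
  refine (Eq.congr_left ?_).trans (mul_eq_zero_iff_left h_factor)
  beta_reduce
  rw [h_unshift, h_linear, h_quadratic, h_const, confOp_apply]
  simp only [invRoot, Real.rpow_add hq]
  linear_combination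
    (1 - q ^ (-l₁) * q ^ (1/2 : ℝ) * t₁⁻¹ * x) * (1 - q ^ (-l₂) * q ^ (1/2 : ℝ) * t₂⁻¹ * x) *
      f (q * x) * h_shift -
    q ^ (-lam - 1) * x ^ lam * f x * mul_inv_cancel₀ hq.ne'

theorem confEq20_rpow_mul_sum_seriesCoeff (hq : 0 < q) (hq1 : q ≠ 1) (ht₁ : t₁ ≠ 0) {N : ℕ}
    (hN : lam + α₁ = -(N : ℝ)) :
    confEq20 q l₁ l₂ α₁ lam t₁ t₂ (fun x => x ^ lam * ∑ n ∈ Finset.range (N + 1),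
      seriesCoeff q (q ^ (lam + α₁)) (q ^ (-lam - α₁ + l₁ - l₂) * t₁ / t₂) n *
        qPoch q (x / (q ^ (l₁ - 1/2) * t₁)) n) := by
  have h_base : q ^ (lam + α₁) = (q ^ N)⁻¹ := by
    rw [hN, Real.rpow_neg hq.le, Real.rpow_natCast]
  have h_param : q ^ (-lam - α₁) = q ^ N := by
    rw [← neg_add', hN, neg_neg, Real.rpow_natCast]
  have h_ratio : q ^ (-lam - α₁ + l₁ - l₂) * t₁ / t₂ =
      q ^ N * (invRoot q l₂ t₂ / invRoot q l₁ t₁) := by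
    rw [invRoot_div_invRoot hq, ← h_param, add_sub_assoc, Real.rpow_add hq]
    ring
  have h_root : invRoot q l₁ t₁ ≠ 0 :=
    mul_ne_zero (Real.rpow_pos_of_pos hq _).ne' (inv_ne_zero ht₁)
  have h_sol := confOp_sum_seriesCoeff_eq_zero hq hq1 h_root (invRoot q l₂ t₂) N
  rw [confEq20_rpow_mul_iff hq, h_base, h_param, h_ratio]
  simp only [div_rpow_mul_eq_invRoot_mul hq, h_sol, Pi.zero_apply, implies_true]

end ConfEq20

theorem stmt15 (q l₁ l₂ α₁ lam t₁ t₂ lᵢ lᵢ' tᵢ tᵢ' : ℝ) (N : ℕ)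
    (hq : 0 < q) (hq1 : q ≠ 1) (ht₁ : t₁ ≠ 0) (ht₂ : t₂ ≠ 0)
    (hidx : (lᵢ, lᵢ', tᵢ, tᵢ') = (l₁, l₂, t₁, t₂) ∨ (lᵢ, lᵢ', tᵢ, tᵢ') = (l₂, l₁, t₂, t₁))
    (hN : 0 < N) (hNlam : lam + α₁ = -(N : ℝ)) :
    confEq20 q l₁ l₂ α₁ lam t₁ t₂ (fun x =>
      x ^ lam * ∑ n ∈ Finset.range (N + 1),
        (-(q ^ (-lam - α₁ + lᵢ - lᵢ') * tᵢ / tᵢ')) ^ n * q ^ (-(n : ℝ) * ((n : ℝ) - 1) / 2) *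
          (qPoch q (q ^ (lam + α₁)) n / qPoch q q n) *
          qPoch q (x / (q ^ (lᵢ - 1/2) * tᵢ)) n) := by
  simp only [Prod.mk.injEq] at hidx
  obtain ⟨rfl, rfl, rfl, rfl⟩ | ⟨rfl, rfl, rfl, rfl⟩ := hidx
  · exact confEq20_rpow_mul_sum_seriesCoeff hq hq1 ht₁ hNlam
  · exact confEq20_comm.mp (confEq20_rpow_mul_sum_seriesCoeff hq hq1 ht₂ hNlam)
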